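/- arXiv:1501.03682 — 2 statements merged into one kernel-verified Lean document; each statement's English description precedes it below -/
import Mathlib

section
/- (Corollary 4.2, case m = 0.) For every integer n ≥ 2 and every real μ > 1, the function Φ^{(n,0)} vanishes at every nonzero even multiple of π: Φ^{(n,0)}(2πα) = 0 for every α ∈ ℤ \ {0}, while Φ^{(n,0)}(0) = 1. -/
open MeasureTheory Filter Complex

/-- Binomial coefficient `binom p q` extended to integer `q`, zero outside `0 ≤ q ≤ p`. -/
noncomputable def binomZ (p : ℕ) (q : ℤ) : ℝ :=
  if 0 ≤ q then (p.choose q.toNat : ℝ) else 0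

/-- The nonstationary mask `a^{(n,m)}_α` with tension parameter `μ`. -/
noncomputable def maskNS (n m : ℕ) (μ : ℝ) (α : ℤ) : ℝ :=
  if m = 0 then (if α = 0 ∨ α = 1 then 1/2 else 0)
  else if 0 ≤ α ∧ α ≤ (n : ℤ) + 1 then
    (2 : ℝ) ^ (-((n : ℝ) + 1 + (m : ℝ) ^ (-μ))) *
      (binomZ (n+1) α + 4 * ((2 : ℝ) ^ ((m : ℝ) ^ (-μ)) - 1) * binomZ (n-1) (α-1))
  else 0

/-- The symbol `A^{(n,m)}(z) = Σ_{α=0}^{n+1} a^{(n,m)}_α z^α`. -/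
noncomputable def symbolNS (n m : ℕ) (μ : ℝ) (z : ℂ) : ℂ :=
  ∑ α ∈ Finset.range (n+2), (maskNS n m μ (α : ℤ) : ℂ) * z ^ α

/-- Partial product `∏_{k=m}^{N-1} A^{(n,k)}(e^{-iω/2^{k+1}})` of the infinite product
defining the Fourier transform `Φ^{(n,m)}` of the refinable ripplet `φ^{(n,m)}`. -/
noncomputable def partialProdNS (n m : ℕ) (μ : ℝ) (ω : ℝ) (N : ℕ) : ℂ :=
  ∏ k ∈ Finset.Ico m N, symbolNS n k μ (Complex.exp (-(Complex.I * ω) / 2 ^ (k + 1)))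

lemma symbolNS_zero (n : ℕ) (μ : ℝ) (z : ℂ) : symbolNS n 0 μ z = (1 + z) / 2 := by
  unfold symbolNS
  rw [Finset.sum_range_succ', Finset.sum_range_succ', Finset.sum_eq_zero]
  · simp [maskNS]
    ring
  · intro x _
    have h1 : ¬ ((x : ℤ) + 1 + 1 = 0) := by omega
    have h2 : ¬ ((x : ℤ) + 1 + 1 = 1) := by omega
    simp [maskNS, h1, h2]

lemma sum_binomZ_aux (p : ℕ) (z : ℂ) :
    ∑ α ∈ Finset.range (p + 1), ((binomZ p (α : ℤ) : ℝ) : ℂ) * z ^ α = (1 + z) ^ p := by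
  rw [add_comm 1 z, add_pow]
  refine Finset.sum_congr rfl fun x _ => ?_
  simp [binomZ]
  ring

lemma sum_binomZ_shift (p : ℕ) (z : ℂ) :
    ∑ α ∈ Finset.range (p + 3), ((binomZ p ((α : ℤ) - 1) : ℝ) : ℂ) * z ^ α
      = z * (1 + z) ^ p := by
  rw [Finset.sum_range_succ', Finset.sum_range_succ, ← sum_binomZ_aux, Finset.mul_sum]
  have h : ((binomZ p (((p + 1 + 1 : ℕ) : ℤ) - 1) : ℝ) : ℂ) = 0 := by
    have : (((p + 1 + 1 : ℕ) : ℤ) - 1) = ((p + 1 : ℕ) : ℤ) := by push_cast; ring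
    rw [this]
    have h0 : (0 : ℤ) ≤ ((p + 1 : ℕ) : ℤ) := by positivity
    simp only [binomZ, h0, if_true, Int.toNat_natCast]
    simp
  have h' : ((binomZ p (((0 : ℕ) : ℤ) - 1) : ℝ) : ℂ) = 0 := by
    simp [binomZ]
  rw [h, h', zero_mul, zero_mul, add_zero, add_zero]
  refine Finset.sum_congr rfl fun x _ => ?_
  have : (((x + 1 : ℕ) : ℤ) - 1) = (x : ℤ) := by push_cast; ring
  rw [this]
  ring

lemma symbolNS_pos (p m : ℕ) (hm : m ≠ 0) (μ : ℝ) (z : ℂ) :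
    symbolNS (p + 1) m μ z =
      (((2 : ℝ) ^ (-(((p + 1 : ℕ) : ℝ) + 1 + (m : ℝ) ^ (-μ))) : ℝ) : ℂ) *
      ((1 + z) ^ (p + 2) +
        4 * ((((2 : ℝ) ^ ((m : ℝ) ^ (-μ)) : ℝ) : ℂ) - 1) * (z * (1 + z) ^ p)) := by
  unfold symbolNS
  rw [← sum_binomZ_aux (p + 2), ← sum_binomZ_shift, Finset.mul_sum, ← Finset.sum_add_distrib,
    Finset.mul_sum]
  refine Finset.sum_congr rfl fun x hx => ?_
  have hx' := Finset.mem_range.1 hx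
  have h1 : 0 ≤ (x : ℤ) ∧ (x : ℤ) ≤ ((p + 1 : ℕ) : ℤ) + 1 := by omega
  unfold maskNS
  rw [if_neg hm, if_pos h1, Nat.add_sub_cancel]
  simp only [Complex.ofReal_mul, Complex.ofReal_add, Complex.ofReal_sub, Complex.ofReal_one,
    Complex.ofReal_ofNat]
  ring

lemma symbolNS_one (n m : ℕ) (hn : 2 ≤ n) (μ : ℝ) : symbolNS n m μ 1 = 1 := by
  by_cases hm : m = 0
  · subst hm
    rw [symbolNS_zero]; norm_num
  · obtain ⟨p, rfl⟩ : ∃ p, n = p + 1 := ⟨n - 1, by omega⟩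
    rw [symbolNS_pos p m hm]
    generalize (m : ℝ) ^ (-μ) = e
    have key : (2 : ℝ) ^ (-(((p + 1 : ℕ) : ℝ) + 1 + e)) *
        ((1 + 1) ^ (p + 2) + 4 * ((2 : ℝ) ^ e - 1) * (1 * (1 + 1) ^ p)) = 1 := by
      have h : ((p + 1 : ℕ) : ℝ) + 1 = ((p + 2 : ℕ) : ℝ) := by push_cast; ring
      rw [h, Real.rpow_neg (by norm_num), Real.rpow_add (by norm_num), Real.rpow_natCast]
      have h2 : (2 : ℝ) ^ e ≠ 0 := (Real.rpow_pos_of_pos (by norm_num) e).ne'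
      rw [show (1 + 1 : ℝ) = 2 by norm_num, inv_mul_eq_one₀ (by positivity)]
      ring
    exact_mod_cast congrArg (fun x : ℝ => (x : ℂ)) key

lemma symbolNS_neg_one (n m : ℕ) (hn : 2 ≤ n) (μ : ℝ) : symbolNS n m μ (-1) = 0 := by
  by_cases hm : m = 0
  · subst hm
    rw [symbolNS_zero]; norm_num
  · obtain ⟨p, rfl⟩ : ∃ p, n = p + 1 := ⟨n - 1, by omega⟩
    rw [symbolNS_pos p m hm]
    have : p ≠ 0 := by omega
    simp [this]

lemma exists_two_pow_odd (α : ℤ) (h : α ≠ 0) : ∃ (k : ℕ) (b : ℤ), α = 2 ^ k * (2 * b + 1) := by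
  obtain ⟨c, hc, hd⟩ := (Int.finiteMultiplicity_iff.2 ⟨by decide, h⟩ :
    FiniteMultiplicity (2 : ℤ) α).exists_eq_pow_mul_and_not_dvd
  exact ⟨_, c / 2, hc.trans (by congr 1; omega)⟩

/-- Corollary 4.2, case `m = 0`: `Φ^{(n,0)}` vanishes at every nonzero even multiple of `π`
and equals `1` at the origin. -/
theorem strang_fix_level_zero (n : ℕ) (hn : 2 ≤ n) (μ : ℝ) (hμ : 1 < μ)
    (Φ : ℝ → ℂ)
    (hΦ : ∀ ω : ℝ, Tendsto (fun N => partialProdNS n 0 μ ω N) atTop (nhds (Φ ω))) :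
    (∀ α : ℤ, α ≠ 0 → Φ (2 * Real.pi * α) = 0) ∧ Φ 0 = 1 := by
  constructor
  · intro α hα
    obtain ⟨k, b, hk⟩ := exists_two_pow_odd α hα
    refine tendsto_nhds_unique (hΦ _) (tendsto_const_nhds.congr' ?_)
    filter_upwards [eventually_gt_atTop k] with N hN
    symm
    refine Finset.prod_eq_zero (Finset.mem_Ico.2 ⟨Nat.zero_le k, hN⟩) ?_
    have hz : Complex.exp (-(Complex.I * ((2 * Real.pi * α : ℝ) : ℂ)) / 2 ^ (k + 1)) = -1 := by
      have : -(Complex.I * ((2 * Real.pi * α : ℝ) : ℂ)) / 2 ^ (k + 1)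
          = Real.pi * Complex.I + ((-b - 1 : ℤ) : ℂ) * (2 * Real.pi * Complex.I) := by
        rw [hk]
        push_cast
        have : (2 : ℂ) ^ k ≠ 0 := pow_ne_zero _ two_ne_zero
        rw [pow_succ]
        field_simp
        ring
      rw [this, Complex.exp_add, Complex.exp_int_mul_two_pi_mul_I, Complex.exp_pi_mul_I, mul_one]
    rw [hz]
    exact symbolNS_neg_one n k hn μ
  · refine tendsto_nhds_unique (hΦ 0) (tendsto_const_nhds.congr' ?_)
    filter_upwards with N
    symm
    refine Finset.prod_eq_one fun k _ => ?_
    simpa using symbolNS_one n k hn μ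
end

section
/- (Central symmetry of φ^{(n,m)}, part of Theorem 4.6, Fourier form.) For every integer n ≥ 2, every real μ > 1, and every integer m ≥ 1, the complex conjugate of Φ^{(n,m)}(ω) equals e^{i (n+1) 2^{-m} ω} · Φ^{(n,m)}(ω) for all real ω. Equivalently, the refinable ripplet φ^{(n,m)}, whose Fourier transform is Φ^{(n,m)}, is symmetric about the midpoint of its support: φ^{(n,m)}(2^{-m}(n+1) − x) = φ^{(n,m)}(x). -/
open MeasureTheory Filter Complex

lemma binomZ_symm (p : ℕ) (q r : ℤ) (h : q + r = p) : binomZ p q = binomZ p r := by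
  unfold binomZ
  by_cases hq : 0 ≤ q
  · by_cases hr : 0 ≤ r
    · rw [if_pos hq, if_pos hr]
      congr 1
      exact Nat.choose_symm_of_eq_add (by omega)
    · rw [if_pos hq, if_neg hr, Nat.choose_eq_zero_of_lt (by omega)]
      simp
  · by_cases hr : 0 ≤ r
    · rw [if_neg hq, if_pos hr, Nat.choose_eq_zero_of_lt (by omega)]
      simp
    · rw [if_neg hq, if_neg hr]

lemma maskNS_symm (n k : ℕ) (hn : 2 ≤ n) (hk : 1 ≤ k) (μ : ℝ) (a b : ℤ) (h : a + b = n + 1) :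
    maskNS n k μ a = maskNS n k μ b := by
  unfold maskNS
  have hk0 : ¬ k = 0 := by omega
  rw [if_neg hk0, if_neg hk0,
    binomZ_symm (n+1) a b (by push_cast; omega),
    binomZ_symm (n-1) (a-1) (b-1) (by omega)]
  by_cases h1 : 0 ≤ a ∧ a ≤ (n : ℤ) + 1
  · rw [if_pos h1, if_pos (by omega)]
  · rw [if_neg h1, if_neg (by omega)]

lemma symbolNS_symm (n k : ℕ) (hn : 2 ≤ n) (hk : 1 ≤ k) (μ : ℝ) (z w : ℂ) (h : w * z = 1) :
    symbolNS n k μ w = w ^ (n+1) * symbolNS n k μ z := by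
  unfold symbolNS
  rw [← Finset.sum_range_reflect, Finset.mul_sum]
  refine Finset.sum_congr rfl fun j hj => ?_
  have hj' : j < n + 2 := Finset.mem_range.1 hj
  obtain ⟨c, hc⟩ : ∃ c, n + 1 = c + j := ⟨n + 1 - j, by omega⟩
  have e : n + 2 - 1 - j = c := by omega
  rw [e, maskNS_symm n k hn hk μ (c : ℤ) (j : ℤ) (by omega), hc, pow_add]
  have : w ^ j * z ^ j = 1 := by rw [← mul_pow, h, one_pow]
  linear_combination (-(maskNS n k μ j : ℂ) * w ^ c) * this

lemma conj_symbolNS (n k : ℕ) (μ : ℝ) (z : ℂ) :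
    (starRingEnd ℂ) (symbolNS n k μ z) = symbolNS n k μ ((starRingEnd ℂ) z) := by
  simp [symbolNS, map_sum]

lemma conj_factor (n k : ℕ) (hn : 2 ≤ n) (hk : 1 ≤ k) (μ ω : ℝ) :
    (starRingEnd ℂ) (symbolNS n k μ (Complex.exp (-(Complex.I * ω) / 2 ^ (k + 1)))) =
      Complex.exp (Complex.I * (((n : ℂ) + 1) * ω * (2 ^ (k+1))⁻¹)) *
      symbolNS n k μ (Complex.exp (-(Complex.I * ω) / 2 ^ (k + 1))) := by
  have e : (starRingEnd ℂ) (Complex.exp (-(Complex.I * ω) / 2 ^ (k + 1))) =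
      Complex.exp (Complex.I * ω / 2 ^ (k + 1)) := by
    rw [← Complex.exp_conj]
    have h2 : (starRingEnd ℂ) 2 = 2 := Complex.conj_ofNat 2
    simp [h2]
  rw [conj_symbolNS, e, symbolNS_symm n k hn hk μ (Complex.exp (-(Complex.I * ω) / 2 ^ (k + 1)))]
  · rw [← Complex.exp_nat_mul]
    congr 2
    push_cast
    ring
  · rw [← Complex.exp_add, ← Complex.exp_zero]
    congr 1
    ring

lemma conj_partial (n m : ℕ) (hn : 2 ≤ n) (hm : 1 ≤ m) (μ ω : ℝ) (N : ℕ) (hN : m ≤ N) :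
    (starRingEnd ℂ) (partialProdNS n m μ ω N) =
      Complex.exp (Complex.I * (((n : ℂ) + 1) * ((2 ^ m)⁻¹ - (2⁻¹) ^ N) * ω)) *
      partialProdNS n m μ ω N := by
  induction N, hN using Nat.le_induction with
  | base => simp [partialProdNS]
  | succ N hN ih =>
    have e : partialProdNS n m μ ω (N+1) = partialProdNS n m μ ω N *
        symbolNS n N μ (Complex.exp (-(Complex.I * ω) / 2 ^ (N + 1))) := by
      unfold partialProdNS
      rw [Finset.prod_Ico_succ_top hN]
    rw [e, map_mul, ih, conj_factor n N hn (by omega)]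
    rw [mul_mul_mul_comm, ← Complex.exp_add]
    congr 2
    rw [inv_pow, inv_pow, pow_succ]
    field_simp
    ring

/-- Central symmetry of `φ^{(n,m)}` (part of Theorem 4.6, Fourier form):
`conj (Φ^{(n,m)}(ω)) = e^{i(n+1)2^{-m}ω} Φ^{(n,m)}(ω)`, i.e. the refinable ripplet is
symmetric about the midpoint of its support. -/
theorem central_symmetry (n : ℕ) (hn : 2 ≤ n) (μ : ℝ) (hμ : 1 < μ)
    (m : ℕ) (hm : 1 ≤ m)
    (Φ : ℝ → ℂ)
    (hΦ : ∀ ω : ℝ, Tendsto (fun N => partialProdNS n m μ ω N) atTop (nhds (Φ ω))) :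
    ∀ ω : ℝ, (starRingEnd ℂ) (Φ ω) =
      Complex.exp (Complex.I * (((n : ℂ) + 1) * 2 ^ (-(m : ℤ)) * ω)) * Φ ω := by
  intro ω
  have h1 := (Complex.continuous_conj.tendsto _).comp (hΦ ω)
  have h0 : Tendsto (fun N : ℕ => ((2:ℂ)⁻¹) ^ N) atTop (nhds 0) :=
    tendsto_pow_atTop_nhds_zero_of_norm_lt_one (by norm_num)
  have hc : Continuous fun t : ℂ =>
      Complex.exp (Complex.I * (((n : ℂ) + 1) * ((2 ^ m)⁻¹ - t) * ω)) := by fun_prop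
  have h2 := ((hc.tendsto 0).comp h0).mul (hΦ ω)
  have h3 := tendsto_nhds_unique_of_eventuallyEq h1 h2 (by
    filter_upwards [eventually_ge_atTop m] with N hN
    exact conj_partial n m hn hm μ ω N hN)
  rw [h3]
  simp [zpow_neg]
end
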